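/- Fix ε ∈ (0,1/2), m ∈ [−1+2ε, 1−2ε], and λ* > 1. There exists N_ε > 0 such that for every n > N_ε, every h ∈ L^ε_n, every C ∈ (εΓ_n(h), (1−ε)Γ_n(h)), and every x ∈ R_{n,λ*}(h), the system of equations { M*_n(h, Ã) + (1/2)log(2π M''_n(h, Λ̃)) = C with Ã ∈ (0, Σ_n(h)); M'_n(h, Λ̃) = Ã; M'_n(h, Λ̃ˣ) = Ã + x } admits a solution (Ã_n(h), Λ̃_n(h), Λ̃ˣ_n(h)) (with Ã_n measurable in h) satisfying Ã_n(h) ∈ [A⁻_n(h), A⁺_n(h)], Λ̃_n(h) ∈ [Λ_n(h,A⁻_n(h)), Λ_n(h,A⁺_n(h))], and Λ̃ˣ_n(h) ∈ [Λ_n(h,A⁻_n(h)+x), Λ_n(h,A⁺_n(h)+x)]. -/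

import Mathlib

open MeasureTheory Real Filter Set
open scoped ENNReal Topology BigOperators

noncomputable section

/-- Assumption 1 of the paper, phrased for the law `μ` of `h₁`. -/
structure Assumption1 (μ : Measure ℝ) : Prop where
  isProb : IsProbabilityMeasure μ
  acPart : ¬ μ.MutuallySingular (volume : Measure ℝ)
  smallBall : ∃ ε > (0:ℝ), ∃ p₁ > (0:ℝ), ∀ t ∈ Set.Ico (0:ℝ) ε,
    (μ {x : ℝ | |x| < t}).toReal ≤ p₁ * t
  densityLB : ∃ c d p₂ : ℝ, c < d ∧ 0 < p₂ ∧
    ∀ s : Set ℝ, s ⊆ Set.Icc c d → MeasurableSet s →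
      ENNReal.ofReal p₂ * volume s ≤ μ s
  intAbs : Integrable (fun x : ℝ => |x|) μ
  intSq : Integrable (fun x : ℝ => x ^ 2) μ
  intCube : Integrable (fun x : ℝ => |x| ^ 3) μ

/-- `g(λ) = log(((1+m)/2)e^{λ(1−m)} + ((1−m)/2)e^{−λ(1+m)})`. -/
def gfun (m lam : ℝ) : ℝ :=
  Real.log ((1 + m) / 2 * Real.exp (lam * (1 - m)) + (1 - m) / 2 * Real.exp (-(lam * (1 + m))))

/-- `M_n(h,λ) = Σ_{i=1}^n g(λ h_i)`. -/
def Mn (m : ℝ) (n : ℕ) (hs : ℕ → ℝ) (lam : ℝ) : ℝ :=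
  ∑ i ∈ Finset.range n, gfun m (lam * hs i)

/-- `M*_n(h,a) = sup_{λ∈ℝ}(λa − M_n(h,λ))`. -/
def MstarN (m : ℝ) (n : ℕ) (hs : ℕ → ℝ) (a : ℝ) : ℝ :=
  ⨆ lam : ℝ, (lam * a - Mn m n hs lam)

/-- `Σ_n(h) = −m Σ_{i=1}^n h_i + Σ_{i=1}^n |h_i|`. -/
def SigmaN (m : ℝ) (n : ℕ) (hs : ℕ → ℝ) : ℝ :=
  -m * ∑ i ∈ Finset.range n, hs i + ∑ i ∈ Finset.range n, |hs i|

/-- `Γ_n(h) = −Σ_{i=1}^n log(1 + sign(h_i) m) + n log 2`. -/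
def GammaN (m : ℝ) (n : ℕ) (hs : ℕ → ℝ) : ℝ :=
  -(∑ i ∈ Finset.range n, Real.log (1 + Real.sign (hs i) * m)) + n * Real.log 2

/-- The set `L^ε_n` of good disorder configurations. -/
def Lset (m ε : ℝ) (n : ℕ) : Set (ℕ → ℝ) :=
  {hs | 2 * π * ∑ i ∈ Finset.range n, (hs i) ^ 2 ≤ (n : ℝ) ^ ((3:ℝ)/2) ∧
    (∀ i < n, 16 / ((n : ℝ)^5 * ε^8) ≤ 2 * π * (hs i)^2) ∧
    SigmaN m n hs ∈ Set.Ioo ((n : ℝ) ^ ((4:ℝ)/5)) ((n : ℝ) ^ ((3:ℝ)/2))}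

/-- `ς* = E[h₁ g'(h₁ λ*)]`. -/
def sigmaStar (μ : Measure ℝ) (m lamStar : ℝ) : ℝ :=
  ∫ x, x * deriv (gfun m) (x * lamStar) ∂μ

/-!
Along the parametrisation `a = M'_n(λ)` of the slopes, the Legendre transform is
`M*_n(M'_n(λ)) = λ M'_n(λ) - M_n(λ)`, so the first two equations reduce to the single equation
`λ M'_n(λ) - M_n(λ) + ½ log (2π M''_n(λ)) = C` in `λ`. The correction `½ log (2π M''_n)` is at most
`¾ log n` everywhere because `g'' ≤ 1`. It exceeds `-2 log n` at `λ = Λ_n(A⁺_n)`: there the relative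
entropy `M*_n` stays a distance of order `n` below its supremum `Γ_n`, so a positive fraction of the
tilted spins is non-degenerate and `M''_n` cannot be smaller than `n⁻⁴`. By the intermediate
value theorem there is a root between `Λ_n(A⁻_n)` and `Λ_n(A⁺_n)`, and taking the first crossing
makes the choice measurable in `h`.
-/

section FirstCrossing

/-- The first time `t > 0` at which `f` exceeds the level `c`, used to select a root of `f = c`
measurably. The infimum is over rational times, so that it depends measurably on `f` without any
regularity; for continuous `f` this changes nothing. If `f` never exceeds `c` at a positive
rational, the value is `sInf ∅ = 0`. -/
def firstCrossing (f : ℝ → ℝ) (c : ℝ) : ℝ :=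
  sInf ({t | 0 < t ∧ c < f t} ∩ range ((↑) : ℚ → ℝ))

lemma firstCrossing_lt_iff {f : ℝ → ℝ} {c s : ℝ} :
    firstCrossing f c < s ↔
      (∃ q : ℚ, (0 < (q : ℝ) ∧ c < f q) ∧ (q : ℝ) < s) ∨
        (∀ q : ℚ, ¬(0 < (q : ℝ) ∧ c < f q)) ∧ 0 < s := by
  unfold firstCrossing
  rcases ({t | 0 < t ∧ c < f t} ∩ range ((↑) : ℚ → ℝ)).eq_empty_or_nonempty with hempty | hne
  · have hnot : ∀ q : ℚ, ¬(0 < (q : ℝ) ∧ c < f q) := fun q hq =>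
      eq_empty_iff_forall_notMem.1 hempty q ⟨hq, q, rfl⟩
    rw [hempty, Real.sInf_empty]
    exact ⟨fun hs => .inr ⟨hnot, hs⟩,
      fun h => h.elim (fun ⟨q, hq, _⟩ => absurd hq (hnot q)) And.right⟩
  · rw [csInf_lt_iff ⟨0, fun t ht => ht.1.1.le⟩ hne]
    obtain ⟨_, hp, p, rfl⟩ := hne
    constructor
    · rintro ⟨_, ⟨hq, q, rfl⟩, hqs⟩
      exact .inl ⟨q, hq, hqs⟩
    · rintro (⟨q, hq, hqs⟩ | ⟨hnot, -⟩)
      · exact ⟨q, ⟨hq, q, rfl⟩, hqs⟩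
      · exact absurd hp (hnot p)

lemma measurable_firstCrossing {Ω : Type*} [MeasurableSpace Ω] {F : Ω → ℝ → ℝ}
    (hF : ∀ t, Measurable fun ω => F ω t) (c : ℝ) :
    Measurable fun ω => firstCrossing (F ω) c := by
  refine measurable_of_Iio fun s => ?_
  have hcross (q : ℚ) : Measurable fun ω => 0 < (q : ℝ) ∧ c < F ω q :=
    measurable_const.and (measurableSet_setOfPred.1 (measurableSet_lt measurable_const (hF q)))
  simp only [preimage, mem_Iio, firstCrossing_lt_iff]
  exact measurableSet_setOfPred.2 <| (Measurable.exists fun q => (hcross q).and measurable_const).or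
    ((Measurable.forall fun q => (hcross q).not).and measurable_const)

lemma firstCrossing_spec {f : ℝ → ℝ} {c l : ℝ} (hf : Continuous f) (h0 : f 0 < c) (hl : 0 < l)
    (hfl : c < f l) :
    0 < firstCrossing f c ∧ firstCrossing f c ≤ l ∧ f (firstCrossing f c) = c := by
  set U : Set ℝ := {t | 0 < t ∧ c < f t}
  set S : Set ℝ := U ∩ range ((↑) : ℚ → ℝ)
  have hUopen : IsOpen U := isOpen_Ioi.inter (isOpen_lt continuous_const hf)
  have hUS : U ⊆ closure S := (Rat.denseRange_cast (𝕜 := ℝ)).open_subset_closure_inter hUopen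
  have hSbdd : BddBelow S := ⟨0, fun t ht => ht.1.1.le⟩
  have hSne : S.Nonempty := closure_nonempty_iff.1 ⟨l, hUS ⟨hl, hfl⟩⟩
  have hle : ∀ t ∈ U, firstCrossing f c ≤ t := fun t ht =>
    closure_minimal (fun _ hs => csInf_le hSbdd hs) isClosed_Ici (hUS ht)
  obtain ⟨hT0, hcT⟩ : 0 ≤ firstCrossing f c ∧ c ≤ f (firstCrossing f c) :=
    closure_minimal (t := Ici 0 ∩ {t | c ≤ f t}) (fun t ht => ⟨ht.1.1.le, ht.1.2.le⟩)
      (isClosed_Ici.inter (isClosed_le continuous_const hf)) (csInf_mem_closure hSne hSbdd)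
  have hTpos : 0 < firstCrossing f c := by
    refine hT0.lt_of_ne fun h => ?_
    rw [← h] at hcT
    exact h0.not_ge hcT
  refine ⟨hTpos, hle l ⟨hl, hfl⟩, hcT.antisymm' ?_⟩
  by_contra! hlt
  obtain ⟨r, hr, hrU⟩ := exists_Ioc_subset_of_mem_nhds
    (hUopen.mem_nhds ⟨hTpos, hlt⟩) ⟨0, hTpos⟩
  obtain ⟨t, hrt, htT⟩ := exists_between hr
  exact htT.not_ge (hle t (hrU ⟨hrt, htT.le⟩))

end FirstCrossing

lemma exists_eq_add_mem_Icc {φ ψ : ℝ → ℝ} {a b c x σ : ℝ} (hφ : Monotone φ)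
    (hψ : RightInvOn ψ φ (Ico 0 σ)) (hac : a ≤ c) (hcb : c ≤ b) (hx : -a < x) (hx' : x < σ - b) :
    ∃ y, φ y = c + x ∧ y ∈ Icc (ψ (a + x)) (ψ (b + x)) := by
  have hmono : MonotoneOn ψ (Ico 0 σ) :=
    Function.monotoneOn_of_rightInvOn_of_mapsTo (hφ.monotoneOn univ) hψ (mapsTo_univ _ _)
  have hshift {t : ℝ} (hat : a ≤ t) (htb : t ≤ b) : t + x ∈ Ico 0 σ := ⟨by linarith, by linarith⟩
  exact ⟨ψ (c + x), hψ (hshift hac hcb),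
    hmono (hshift le_rfl (hac.trans hcb)) (hshift hac hcb) (by gcongr),
    hmono (hshift hac hcb) (hshift (hac.trans hcb) le_rfl) (by gcongr)⟩

section Legendre

/-- The Legendre transform of a convex function `f` at the slope `f' l`, as a function of the point
`l` at which this slope is attained. -/
def slopeConjugate (f : ℝ → ℝ) (l : ℝ) : ℝ :=
  l * deriv f l - f l

/-- The Legendre transform of `f` at the slope `f' l` with its second order correction: the
left-hand side of the equation determining `Ã_n`, written in terms of `Λ̃_n = l`. -/
def saddleLevel (f : ℝ → ℝ) (l : ℝ) : ℝ :=
  slopeConjugate f l + 1 / 2 * log (2 * π * deriv (deriv f) l)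

variable {f : ℝ → ℝ}

lemma iSup_mul_deriv_sub (hconv : ConvexOn ℝ univ f) (hf : Differentiable ℝ f) (l : ℝ) :
    ⨆ x, (x * deriv f l - f x) = slopeConjugate f l := by
  have hderiv : HasDerivAt (fun x => f x - deriv f l * x) 0 l := by
    refine ((hf l).hasDerivAt.sub ((hasDerivAt_id l).const_mul (deriv f l))).congr_deriv ?_
    ring
  have hconv' : ConvexOn ℝ univ fun x => f x - deriv f l * x :=
    hconv.sub ((LinearMap.mul ℝ ℝ (deriv f l)).concaveOn convex_univ)
  have hmin : IsMinOn (fun x => f x - deriv f l * x) univ l :=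
    hconv'.isMinOn_of_rightDeriv_eq_zero (by simp)
      (hderiv.hasDerivWithinAt.derivWithin (uniqueDiffWithinAt_Ioi l))
  have hgreatest : IsGreatest (range fun x => x * deriv f l - f x) (slopeConjugate f l) := by
    refine ⟨⟨l, rfl⟩, ?_⟩
    rintro _ ⟨x, rfl⟩
    have hx : f l - deriv f l * l ≤ f x - deriv f l * x := hmin (mem_univ x)
    simp only [slopeConjugate]
    linarith
  exact hgreatest.csSup_eq

variable (hf : ContDiff ℝ 2 f) (hf'' : ∀ l, 0 < deriv (deriv f) l)
include hf hf''

lemma slopeConjugate_strictMonoOn : StrictMonoOn (slopeConjugate f) (Ici 0) := by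
  have hderiv (l : ℝ) : HasDerivAt (slopeConjugate f) (l * deriv (deriv f) l) l := by
    refine (((hasDerivAt_id l).mul (hf.differentiable_deriv_two l).hasDerivAt).sub
      (hf.differentiable two_ne_zero l).hasDerivAt).congr_deriv ?_
    simp only [id]
    ring
  refine strictMonoOn_of_deriv_pos (convex_Ici 0)
    (fun l _ => (hderiv l).continuousAt.continuousWithinAt) fun l hl => ?_
  rw [interior_Ici] at hl
  rw [(hderiv l).deriv]
  exact mul_pos hl (hf'' l)

lemma continuous_saddleLevel : Continuous (saddleLevel f) := by
  have hf1 : Continuous (deriv f) := hf.differentiable_deriv_two.continuous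
  have hf2 : Continuous (deriv (deriv f)) :=
    ((contDiff_succ_iff_deriv (n := 1)).1 hf).2.2.continuous_deriv_one
  have hlog : Continuous fun l => log (2 * π * deriv (deriv f) l) :=
    (continuous_const.mul hf2).log fun l => (mul_pos two_pi_pos (hf'' l)).ne'
  exact ((continuous_id.mul hf1).sub hf.continuous).add (continuous_const.mul hlog)

lemma firstCrossing_saddleLevel_mem_Icc {a b C u v : ℝ} (hf0 : 0 ≤ f 0) (huC : u < C)
    (ha0 : 0 ≤ a) (hb0 : 0 ≤ b) (ha : slopeConjugate f a = C - u)
    (hb : slopeConjugate f b = C + v) (hu : ∀ l, 1 / 2 * log (2 * π * deriv (deriv f) l) ≤ u)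
    (hv : -v < 1 / 2 * log (2 * π * deriv (deriv f) b)) :
    firstCrossing (saddleLevel f) C ∈ Icc a b ∧
      saddleLevel f (firstCrossing (saddleLevel f) C) = C := by
  have h0 : saddleLevel f 0 < C := by
    simp only [saddleLevel, slopeConjugate, zero_mul]
    linarith [hu 0]
  have hCb : C < saddleLevel f b := by
    simp only [saddleLevel, hb]
    linarith
  have hbpos : 0 < b := hb0.lt_of_ne (by rintro rfl; exact (h0.trans hCb).false)
  obtain ⟨hT0, hTb, hTC⟩ := firstCrossing_spec (continuous_saddleLevel hf hf'') h0 hbpos hCb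
  set T := firstCrossing (saddleLevel f) C
  have haT : slopeConjugate f a ≤ slopeConjugate f T := by
    simp only [saddleLevel] at hTC
    linarith [hu T]
  exact ⟨⟨((slopeConjugate_strictMonoOn hf hf'').le_iff_le ha0 hT0.le).1 haT, hTb⟩, hTC⟩

end Legendre

section Spin

lemma mem_Ioo_of_mem_Icc {ε m : ℝ} (hε : 0 < ε) (hεm : m ∈ Icc (-1 + 2 * ε) (1 - 2 * ε)) :
    m ∈ Ioo (-1) 1 :=
  ⟨by linarith [hεm.1], by linarith [hεm.2]⟩

/-- The probability of the spin `+1` under the law of mean `m` on `{-1, 1}` tilted by `y`, that is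
`p e^y / (p e^y + (1 - p) e^(-y))` with `p = (1 + m) / 2`. -/
def plusProb (m y : ℝ) : ℝ :=
  sigmoid (2 * y + log ((1 + m) / (1 - m)))

lemma plusProb_pos (m y : ℝ) : 0 < plusProb m y := sigmoid_pos _

lemma plusProb_lt_one (m y : ℝ) : plusProb m y < 1 := sigmoid_lt_one _

lemma continuous_plusProb (m : ℝ) : Continuous (plusProb m) :=
  continuous_sigmoid.comp (by fun_prop)

lemma plusProb_neg_neg (m y : ℝ) : plusProb (-m) (-y) = 1 - plusProb m y := by
  have hlog : log ((1 + -m) / (1 - -m)) = -log ((1 + m) / (1 - m)) := by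
    rw [← log_inv, inv_div, sub_neg_eq_add, sub_eq_add_neg]
  rw [plusProb, hlog, mul_neg, ← neg_add, sigmoid_neg, plusProb]

lemma hasDerivAt_plusProb (m y : ℝ) :
    HasDerivAt (plusProb m) (2 * (plusProb m y * (1 - plusProb m y))) y := by
  have hinner : HasDerivAt (fun y => 2 * y + log ((1 + m) / (1 - m))) 2 y := by
    simpa using ((hasDerivAt_id y).const_mul 2).add_const (log ((1 + m) / (1 - m)))
  exact ((hasDerivAt_sigmoid _).comp y hinner).congr_deriv (mul_comm _ _)

lemma plusProb_mul_one_sub_pos (m y : ℝ) : 0 < plusProb m y * (1 - plusProb m y) :=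
  mul_pos (plusProb_pos m y) (sub_pos.2 (plusProb_lt_one m y))

lemma gfun_neg_neg (m y : ℝ) : gfun (-m) (-y) = gfun m y := by
  simp only [gfun]
  ring_nf

variable {m : ℝ} (hm : m ∈ Ioo (-1) 1)
include hm

lemma one_sub_plusProb (y : ℝ) :
    1 - plusProb m y = plusProb m y * ((1 - m) / (1 + m) * exp (-(2 * y))) := by
  have hexp : exp (-(2 * y + log ((1 + m) / (1 - m)))) = (1 - m) / (1 + m) * exp (-(2 * y)) := by
    rw [neg_add, exp_add, ← log_inv, inv_div,
      exp_log (div_pos (by linarith [hm.2]) (by linarith [hm.1])), mul_comm]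
  rw [plusProb, ← sigmoid_neg, ← sigmoid_mul_rexp_neg, hexp]

lemma plusProb_zero : plusProb m 0 = (1 + m) / 2 := by
  have hpos : 0 < 1 + m := by linarith [hm.1]
  have h := one_sub_plusProb hm 0
  rw [mul_zero, neg_zero, exp_zero] at h
  field_simp at h
  linarith

lemma le_plusProb {y : ℝ} (hy : 0 ≤ y) : (1 + m) / 2 ≤ plusProb m y := by
  rw [← plusProb_zero hm]
  exact sigmoid_le (by linarith)

lemma gfun_eq (y : ℝ) : gfun m y = y * (1 - m) + log ((1 + m) / 2) - log (plusProb m y) := by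
  have hpos : 0 < 1 + m := by linarith [hm.1]
  have hq := plusProb_pos m y
  have hsum : (1 + m) / 2 * exp (y * (1 - m)) + (1 - m) / 2 * exp (-(y * (1 + m))) =
      exp (y * (1 - m)) * ((1 + m) / 2) / plusProb m y := by
    have hexp : exp (-(y * (1 + m))) = exp (y * (1 - m)) * exp (-(2 * y)) := by
      rw [← exp_add]
      ring_nf
    have hone := one_sub_plusProb hm y
    field_simp at hone
    rw [eq_div_iff hq.ne', hexp]
    linear_combination -(exp (y * (1 - m)) / 2) * hone
  rw [gfun, hsum, log_div (by positivity) hq.ne', log_mul (exp_ne_zero _) (by positivity), log_exp]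

lemma gfun_zero : gfun m 0 = 0 := by
  rw [gfun_eq hm, plusProb_zero hm]
  ring

lemma hasDerivAt_gfun (y : ℝ) : HasDerivAt (gfun m) (2 * plusProb m y - 1 - m) y := by
  have hq := (plusProb_pos m y).ne'
  rw [funext (gfun_eq hm)]
  refine ((((hasDerivAt_id y).mul_const (1 - m)).add_const (log ((1 + m) / 2))).sub
    ((hasDerivAt_plusProb m y).log hq)).congr_deriv ?_
  field_simp
  ring

lemma contDiff_gfun {k : ℕ∞} : ContDiff ℝ k (gfun m) := by
  have hp : 0 < 1 + m := by linarith [hm.1]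
  have hq : 0 < 1 - m := by linarith [hm.2]
  unfold gfun
  exact ContDiff.log (by fun_prop) fun y => by positivity

lemma slopeConjugate_gfun_neg_neg (y : ℝ) :
    slopeConjugate (gfun (-m)) (-y) = slopeConjugate (gfun m) y := by
  have hm' : -m ∈ Ioo (-1) 1 := ⟨by linarith [hm.2], by linarith [hm.1]⟩
  rw [slopeConjugate, slopeConjugate, (hasDerivAt_gfun hm' _).deriv, (hasDerivAt_gfun hm _).deriv,
    gfun_neg_neg, plusProb_neg_neg]
  ring

lemma neg_log_sub_slopeConjugate_gfun (y : ℝ) :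
    -log ((1 + m) / 2) - slopeConjugate (gfun m) y =
      2 * y * (1 - plusProb m y) - log (plusProb m y) := by
  rw [slopeConjugate, (hasDerivAt_gfun hm y).deriv, gfun_eq hm]
  ring

lemma two_mul_mul_one_sub_plusProb_le {ε δ : ℝ} (hε : 0 < ε) (hεm : ε ≤ (1 + m) / 2) (hδ : 0 < δ)
    (y : ℝ) : 2 * y * (1 - plusProb m y) ≤ δ + (1 - plusProb m y) / (ε * δ) := by
  have hpos : 0 < 1 + m := by linarith [hm.1]
  have hs : 0 < 1 - plusProb m y := sub_pos.2 (plusProb_lt_one m y)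
  have hlinear : 2 * y ≤ ε * δ * exp (2 * y) + 1 / (ε * δ) := by
    have htangent := add_one_le_exp (2 * y + log (ε * δ))
    have hlog := log_le_sub_one_of_pos (show 0 < 1 / (ε * δ) by positivity)
    rw [exp_add, exp_log (by positivity)] at htangent
    rw [one_div, log_inv] at hlog
    rw [one_div]
    linarith
  have hdecay : (1 - plusProb m y) * exp (2 * y) * ε ≤ 1 := by
    have hexp : (1 - plusProb m y) * exp (2 * y) = plusProb m y * ((1 - m) / (1 + m)) := by
      rw [one_sub_plusProb hm, mul_assoc, mul_assoc, ← exp_add, neg_add_cancel, exp_zero, mul_one]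
    calc (1 - plusProb m y) * exp (2 * y) * ε
        ≤ plusProb m y * ((1 - m) / (1 + m)) * ((1 + m) / 2) := by
          rw [hexp]
          have : 0 < 1 - m := by linarith [hm.2]
          have := plusProb_pos m y
          gcongr
      _ = plusProb m y * ((1 - m) / 2) := by field_simp
      _ ≤ 1 := mul_le_one₀ (plusProb_lt_one m y).le (by linarith [hm.2]) (by linarith [hm.1])
  calc 2 * y * (1 - plusProb m y)
      ≤ (ε * δ * exp (2 * y) + 1 / (ε * δ)) * (1 - plusProb m y) := by gcongr
    _ = (1 - plusProb m y) * exp (2 * y) * ε * δ + (1 - plusProb m y) / (ε * δ) := by ring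
    _ ≤ δ + (1 - plusProb m y) / (ε * δ) := by
      gcongr
      exact mul_le_of_le_one_left hδ.le hdecay

lemma neg_log_sub_slopeConjugate_gfun_le {ε δ : ℝ} (hε : 0 < ε) (hεm : ε ≤ (1 + m) / 2)
    (hδ : 0 < δ) {y : ℝ} (hy : 0 ≤ y) :
    -log ((1 + m) / 2) - slopeConjugate (gfun m) y ≤
      δ + (1 + 1 / δ) / ε ^ 2 * (plusProb m y * (1 - plusProb m y)) := by
  have hεq : ε ≤ plusProb m y := hεm.trans (le_plusProb hm hy)
  have hq := plusProb_pos m y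
  have hs : 0 < 1 - plusProb m y := sub_pos.2 (plusProb_lt_one m y)
  have hlog : -log (plusProb m y) ≤ (1 - plusProb m y) / ε := by
    calc -log (plusProb m y) ≤ (plusProb m y)⁻¹ - 1 := by
          rw [← log_inv]
          exact log_le_sub_one_of_pos (inv_pos.2 hq)
      _ = (1 - plusProb m y) / plusProb m y := by field_simp
      _ ≤ (1 - plusProb m y) / ε := by gcongr
  calc -log ((1 + m) / 2) - slopeConjugate (gfun m) y
      = 2 * y * (1 - plusProb m y) - log (plusProb m y) := neg_log_sub_slopeConjugate_gfun hm y
    _ ≤ δ + (1 - plusProb m y) / (ε * δ) + (1 - plusProb m y) / ε := by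
      linarith [two_mul_mul_one_sub_plusProb_le hm hε hεm hδ y]
    _ = δ + (1 + 1 / δ) / ε ^ 2 * (ε * (1 - plusProb m y)) := by
      field_simp
      ring
    _ ≤ δ + (1 + 1 / δ) / ε ^ 2 * (plusProb m y * (1 - plusProb m y)) := by gcongr

omit hm in
-- The two signs of `h` are exchanged by the symmetry `(m, y) ↦ (-m, -y)`.
lemma log_two_sub_slopeConjugate_gfun_le {ε δ : ℝ} (hε : 0 < ε)
    (hεm : m ∈ Icc (-1 + 2 * ε) (1 - 2 * ε)) (hδ : 0 < δ) {h l : ℝ} (hh : h ≠ 0) (hl : 0 ≤ l) :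
    log 2 - log (1 + Real.sign h * m) - slopeConjugate (gfun m) (l * h) ≤
      δ + (1 + 1 / δ) / ε ^ 2 * (plusProb m (l * h) * (1 - plusProb m (l * h))) := by
  have hm := mem_Ioo_of_mem_Icc hε hεm
  rcases hh.lt_or_gt with hneg | hpos
  · have hm' : -m ∈ Ioo (-1) 1 := ⟨by linarith [hm.2], by linarith [hm.1]⟩
    have hbound := neg_log_sub_slopeConjugate_gfun_le hm' hε (by linarith [hεm.2]) hδ
      (neg_nonneg.2 (mul_nonpos_of_nonneg_of_nonpos hl hneg.le))
    rw [slopeConjugate_gfun_neg_neg hm, plusProb_neg_neg, log_div (by linarith [hm.2]) two_ne_zero,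
      sub_sub_cancel] at hbound
    rw [sign_of_neg hneg, neg_one_mul, mul_comm (plusProb m (l * h))]
    linarith
  · have hbound := neg_log_sub_slopeConjugate_gfun_le hm hε (by linarith [hεm.1]) hδ
      (mul_nonneg hl hpos.le)
    rw [log_div (by linarith [hm.1]) two_ne_zero] at hbound
    rw [sign_of_pos hpos, one_mul]
    linarith

end Spin

section Disorder

lemma GammaN_eq_sum (m : ℝ) (n : ℕ) (hs : ℕ → ℝ) :
    GammaN m n hs = ∑ i ∈ Finset.range n, (log 2 - log (1 + Real.sign (hs i) * m)) := by
  rw [GammaN, Finset.sum_sub_distrib, Finset.sum_const, Finset.card_range, nsmul_eq_mul]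
  ring

lemma mul_le_GammaN {ε m : ℝ} (hε : 0 < ε) (hm : m ∈ Icc (-1 + 2 * ε) (1 - 2 * ε)) (n : ℕ)
    (hs : ℕ → ℝ) : n * ε ≤ GammaN m n hs := by
  have hsite (h : ℝ) : ε ≤ log 2 - log (1 + Real.sign h * m) := by
    obtain ⟨hpos, hle⟩ : 0 < 1 + Real.sign h * m ∧ 1 + Real.sign h * m ≤ 2 - 2 * ε := by
      rcases sign_apply_eq h with hsign | hsign | hsign <;> rw [hsign] <;>
        constructor <;> linarith [hm.1, hm.2]
    have hlog := log_le_sub_one_of_pos (half_pos hpos)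
    rw [log_div hpos.ne' two_ne_zero] at hlog
    linarith
  rw [GammaN_eq_sum]
  simpa using Finset.card_nsmul_le_sum (Finset.range n) _ ε fun i _ => hsite (hs i)

lemma Mn_zero {m : ℝ} (hm : m ∈ Ioo (-1) 1) (n : ℕ) (hs : ℕ → ℝ) : Mn m n hs 0 = 0 := by
  simp only [Mn, zero_mul, gfun_zero hm, Finset.sum_const_zero]

variable {m : ℝ} (hm : m ∈ Ioo (-1) 1) (n : ℕ) (hs : ℕ → ℝ)
include hm

lemma contDiff_Mn {k : ℕ∞} : ContDiff ℝ k (Mn m n hs) :=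
  ContDiff.sum fun _ _ => (contDiff_gfun hm).comp (contDiff_id.mul contDiff_const)

lemma deriv_Mn : deriv (Mn m n hs) =
    fun l => ∑ i ∈ Finset.range n, hs i * (2 * plusProb m (l * hs i) - 1 - m) := by
  funext l
  refine (HasDerivAt.fun_sum fun i _ => ?_).deriv
  exact ((hasDerivAt_gfun hm _).comp l (hasDerivAt_mul_const (hs i))).congr_deriv (mul_comm _ _)

lemma deriv_deriv_Mn : deriv (deriv (Mn m n hs)) =
    fun l => 4 * ∑ i ∈ Finset.range n,
      hs i ^ 2 * (plusProb m (l * hs i) * (1 - plusProb m (l * hs i))) := by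
  rw [deriv_Mn hm]
  funext l
  rw [Finset.mul_sum]
  refine (HasDerivAt.fun_sum fun i _ => ?_).deriv
  refine (((((hasDerivAt_plusProb m _).comp l (hasDerivAt_mul_const (hs i))).const_mul 2).sub_const
    1).sub_const m).const_mul (hs i) |>.congr_deriv ?_
  ring

lemma slopeConjugate_Mn (l : ℝ) :
    slopeConjugate (Mn m n hs) l = ∑ i ∈ Finset.range n, slopeConjugate (gfun m) (l * hs i) := by
  simp only [slopeConjugate, deriv_Mn hm, Mn, (hasDerivAt_gfun hm _).deriv, Finset.mul_sum,
    Finset.sum_sub_distrib, mul_assoc]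

lemma deriv_deriv_Mn_le (l : ℝ) :
    deriv (deriv (Mn m n hs)) l ≤ ∑ i ∈ Finset.range n, hs i ^ 2 := by
  simp only [deriv_deriv_Mn hm, Finset.mul_sum]
  refine Finset.sum_le_sum fun i _ => ?_
  nlinarith [mul_nonneg (sq_nonneg (hs i)) (sq_nonneg (2 * plusProb m (l * hs i) - 1))]

variable {n hs}

lemma deriv_deriv_Mn_pos (hne : ∃ i < n, hs i ≠ 0) (l : ℝ) :
    0 < deriv (deriv (Mn m n hs)) l := by
  obtain ⟨i, hi, hhi⟩ := hne
  rw [deriv_deriv_Mn hm]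
  refine mul_pos four_pos (Finset.sum_pos' (fun j _ => ?_) ⟨i, Finset.mem_range.2 hi, ?_⟩)
  · exact mul_nonneg (sq_nonneg _) (plusProb_mul_one_sub_pos m _).le
  · exact mul_pos (by positivity) (plusProb_mul_one_sub_pos m _)

lemma MstarN_deriv_Mn (hne : ∃ i < n, hs i ≠ 0) (l : ℝ) :
    MstarN m n hs (deriv (Mn m n hs) l) = slopeConjugate (Mn m n hs) l :=
  have hsmooth : ContDiff ℝ 2 (Mn m n hs) := contDiff_Mn hm n hs
  iSup_mul_deriv_sub
    (convexOn_univ_of_deriv2_nonneg (hsmooth.differentiable two_ne_zero)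
      hsmooth.differentiable_deriv_two fun l => (deriv_deriv_Mn_pos hm hne l).le)
    (hsmooth.differentiable two_ne_zero) l

omit hm in
lemma GammaN_sub_slopeConjugate_Mn_le {ε δ l : ℝ} (hε : 0 < ε)
    (hεm : m ∈ Icc (-1 + 2 * ε) (1 - 2 * ε)) (hδ : 0 < δ) (hne : ∀ i < n, hs i ≠ 0) (hl : 0 ≤ l) :
    GammaN m n hs - slopeConjugate (Mn m n hs) l ≤
      n * δ + (1 + 1 / δ) / ε ^ 2 *
        ∑ i ∈ Finset.range n, plusProb m (l * hs i) * (1 - plusProb m (l * hs i)) := by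
  have hm := mem_Ioo_of_mem_Icc hε hεm
  calc GammaN m n hs - slopeConjugate (Mn m n hs) l
      = ∑ i ∈ Finset.range n, (log 2 - log (1 + Real.sign (hs i) * m) -
          slopeConjugate (gfun m) (l * hs i)) := by
        rw [GammaN_eq_sum, slopeConjugate_Mn hm, ← Finset.sum_sub_distrib]
    _ ≤ ∑ i ∈ Finset.range n, (δ + (1 + 1 / δ) / ε ^ 2 *
          (plusProb m (l * hs i) * (1 - plusProb m (l * hs i)))) :=
        Finset.sum_le_sum fun i hi =>
          log_two_sub_slopeConjugate_gfun_le hε hεm hδ (hne i (Finset.mem_range.1 hi)) hl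
    _ = _ := by
        rw [Finset.sum_add_distrib, Finset.mul_sum, Finset.sum_const, Finset.card_range,
          nsmul_eq_mul]

lemma mul_sum_plusProb_le_deriv_deriv_Mn {κ : ℝ} (hκ : ∀ i < n, κ ≤ 2 * π * hs i ^ 2) (l : ℝ) :
    4 * κ * ∑ i ∈ Finset.range n, plusProb m (l * hs i) * (1 - plusProb m (l * hs i)) ≤
      2 * π * deriv (deriv (Mn m n hs)) l := by
  have hsum : κ * ∑ i ∈ Finset.range n, plusProb m (l * hs i) * (1 - plusProb m (l * hs i)) ≤
      2 * π * ∑ i ∈ Finset.range n,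
        hs i ^ 2 * (plusProb m (l * hs i) * (1 - plusProb m (l * hs i))) := by
    rw [Finset.mul_sum, Finset.mul_sum]
    refine Finset.sum_le_sum fun i hi => ?_
    rw [← mul_assoc (2 * π)]
    exact mul_le_mul_of_nonneg_right (hκ i (Finset.mem_range.1 hi))
      (plusProb_mul_one_sub_pos m _).le
  simp only [deriv_deriv_Mn hm]
  linarith

end Disorder

section SaddlePoint

/-- The first positive root `Λ̃_n(h)` of the equation for the tilt, obtained from the system by
eliminating `Ã_n = M'_n(h, Λ̃_n)`. -/
def saddlePoint (m : ℝ) (n : ℕ) (C : ℝ) (hs : ℕ → ℝ) : ℝ :=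
  firstCrossing (saddleLevel (Mn m n hs)) C

lemma measurable_saddlePoint {m : ℝ} (hm : m ∈ Ioo (-1) 1) (n : ℕ) (C : ℝ) :
    Measurable (saddlePoint m n C) := by
  refine measurable_firstCrossing (fun l => ?_) C
  have hq : Measurable (plusProb m) := (continuous_plusProb m).measurable
  have hg : Measurable (gfun m) := (contDiff_gfun hm (k := 0)).continuous.measurable
  simp only [saddleLevel, slopeConjugate, deriv_deriv_Mn hm]
  simp only [deriv_Mn hm, Mn]
  fun_prop

lemma measurable_deriv_Mn_saddlePoint {m : ℝ} (hm : m ∈ Ioo (-1) 1) (n : ℕ) (C : ℝ) :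
    Measurable fun hs => deriv (Mn m n hs) (saddlePoint m n C hs) := by
  have hq : Measurable (plusProb m) := (continuous_plusProb m).measurable
  have hT : Measurable (saddlePoint m n C) := measurable_saddlePoint hm n C
  simp only [deriv_Mn hm]
  fun_prop

lemma exists_forall_two_mul_log_le {ε : ℝ} (hε : 0 < ε) :
    ∃ N : ℝ, 1 < N ∧ ∀ x, N < x → 2 * log x ≤ x * ε ^ 2 / 2 := by
  obtain ⟨N, hN⟩ := eventually_atTop.1
    (isLittleO_log_id_atTop.bound (show 0 < ε ^ 2 / 4 by positivity))
  refine ⟨max N 2, by simp, fun x hx => ?_⟩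
  obtain ⟨hNx, h2x⟩ := max_lt_iff.1 hx
  have hbound := hN x hNx.le
  rw [id, norm_eq_abs, norm_eq_abs, abs_of_pos (show 0 < x by linarith)] at hbound
  linarith [le_abs_self (log x)]

variable {ε m : ℝ} {n : ℕ} {hs : ℕ → ℝ}

lemma sub_log_mem_Ioo_and_add_log_mem_Ioo {C : ℝ} (hε : 0 < ε)
    (hεm : m ∈ Icc (-1 + 2 * ε) (1 - 2 * ε)) (hn : 1 < (n : ℝ)) (hlogn : 2 * log n ≤ n * ε ^ 2 / 2)
    (hC : C ∈ Ioo (ε * GammaN m n hs) ((1 - ε) * GammaN m n hs)) :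
    C - 3 / 4 * log n ∈ Ioo 0 (GammaN m n hs) ∧
      C + 2 * log n ∈ Ioo 0 (GammaN m n hs - n * ε ^ 2 / 2) := by
  have hlog : 0 < log n := log_pos hn
  have hΓ : n * ε ^ 2 ≤ ε * GammaN m n hs := by nlinarith [mul_le_GammaN hε hεm n hs]
  refine ⟨⟨?_, ?_⟩, ?_, ?_⟩ <;> linarith [hC.1, hC.2]

lemma half_log_deriv_deriv_Mn_le (hm : m ∈ Ioo (-1) 1) (hne : ∃ i < n, hs i ≠ 0)
    (hsq : 2 * π * ∑ i ∈ Finset.range n, hs i ^ 2 ≤ (n : ℝ) ^ ((3 : ℝ) / 2)) (l : ℝ) :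
    1 / 2 * log (2 * π * deriv (deriv (Mn m n hs)) l) ≤ 3 / 4 * log n := by
  have hn : (0 : ℝ) < n := by
    obtain ⟨i, hi, -⟩ := hne
    exact_mod_cast i.zero_le.trans_lt hi
  have hle : 2 * π * deriv (deriv (Mn m n hs)) l ≤ (n : ℝ) ^ ((3 : ℝ) / 2) :=
    (mul_le_mul_of_nonneg_left (deriv_deriv_Mn_le hm n hs l) two_pi_pos.le).trans hsq
  have hlog := log_le_log (mul_pos two_pi_pos (deriv_deriv_Mn_pos hm hne l)) hle
  rw [log_rpow hn] at hlog
  linarith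

variable (hε : 0 < ε) (hεm : m ∈ Icc (-1 + 2 * ε) (1 - 2 * ε)) (hn : 0 < n)
  (hmin : ∀ i < n, 16 / ((n : ℝ) ^ 5 * ε ^ 8) ≤ 2 * π * hs i ^ 2)
include hε hn hmin

lemma ne_zero_of_forall_le_sq {i : ℕ} (hi : i < n) : hs i ≠ 0 := by
  intro hzero
  have hpos : 0 < 16 / ((n : ℝ) ^ 5 * ε ^ 8) := by positivity
  have hle := hmin i hi
  rw [hzero, zero_pow two_ne_zero, mul_zero] at hle
  exact hpos.not_ge hle

include hεm

lemma inv_pow_four_lt_deriv_deriv_Mn {l : ℝ} (hl : 0 ≤ l)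
    (hgap : n * ε ^ 2 / 2 ≤ GammaN m n hs - slopeConjugate (Mn m n hs) l) :
    ((n : ℝ) ^ 4)⁻¹ < 2 * π * deriv (deriv (Mn m n hs)) l := by
  have hm := mem_Ioo_of_mem_Icc hε hεm
  have hε1 : ε ^ 2 < 1 := by nlinarith [hεm.1, hεm.2]
  have hn' : (0 : ℝ) < n := Nat.cast_pos.2 hn
  have hentropy := hgap.trans (GammaN_sub_slopeConjugate_Mn_le hε hεm
    (show 0 < ε ^ 2 / 4 by positivity) (fun i => ne_zero_of_forall_le_sq hε hn hmin) hl)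
  have hcurv := mul_sum_plusProb_le_deriv_deriv_Mn hm hmin l
  set S := ∑ i ∈ Finset.range n, plusProb m (l * hs i) * (1 - plusProb m (l * hs i))
  have hS : n * ε ^ 6 / (4 * (4 + ε ^ 2)) ≤ S := by
    rw [div_le_iff₀ (by positivity)]
    field_simp at hentropy
    linarith
  calc ((n : ℝ) ^ 4)⁻¹ < 16 / ((n : ℝ) ^ 4 * (ε ^ 2 * (4 + ε ^ 2))) := by
        rw [inv_eq_one_div, div_lt_div_iff₀ (by positivity) (by positivity)]
        have : ε ^ 2 * (4 + ε ^ 2) < 16 := by nlinarith [sq_nonneg ε]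
        nlinarith [pow_pos hn' 4]
    _ = 4 * (16 / ((n : ℝ) ^ 5 * ε ^ 8)) * (n * ε ^ 6 / (4 * (4 + ε ^ 2))) := by field_simp
    _ ≤ 4 * (16 / ((n : ℝ) ^ 5 * ε ^ 8)) * S := by gcongr
    _ ≤ 2 * π * deriv (deriv (Mn m n hs)) l := hcurv

lemma neg_two_mul_log_lt_half_log_deriv_deriv_Mn {l : ℝ} (hl : 0 ≤ l)
    (hgap : n * ε ^ 2 / 2 ≤ GammaN m n hs - slopeConjugate (Mn m n hs) l) :
    -(2 * log n) < 1 / 2 * log (2 * π * deriv (deriv (Mn m n hs)) l) := by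
  have hlog := log_lt_log (by positivity)
    (inv_pow_four_lt_deriv_deriv_Mn hε hεm hn hmin hl hgap)
  rw [log_inv, log_pow, Nat.cast_ofNat] at hlog
  linarith

lemma saddlePoint_mem_Icc {a b C : ℝ}
    (hsq : 2 * π * ∑ i ∈ Finset.range n, hs i ^ 2 ≤ (n : ℝ) ^ ((3 : ℝ) / 2))
    (hlower : 3 / 4 * log n < C) (hupper : C + 2 * log n < GammaN m n hs - n * ε ^ 2 / 2)
    (ha0 : 0 ≤ a) (ha : slopeConjugate (Mn m n hs) a = C - 3 / 4 * log n)
    (hb0 : 0 ≤ b) (hb : slopeConjugate (Mn m n hs) b = C + 2 * log n) :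
    saddlePoint m n C hs ∈ Icc a b ∧ saddleLevel (Mn m n hs) (saddlePoint m n C hs) = C := by
  have hm := mem_Ioo_of_mem_Icc hε hεm
  have hne : ∃ i < n, hs i ≠ 0 := ⟨0, hn, ne_zero_of_forall_le_sq hε hn hmin hn⟩
  exact firstCrossing_saddleLevel_mem_Icc (contDiff_Mn hm n hs) (deriv_deriv_Mn_pos hm hne)
    (Mn_zero hm n hs).ge hlower ha0 hb0 ha hb (half_log_deriv_deriv_Mn_le hm hne hsq)
    (neg_two_mul_log_lt_half_log_deriv_deriv_Mn hε hεm hn hmin hb0 (by rw [hb]; linarith))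

end SaddlePoint

theorem stmt13_general {ε : ℝ} (hε : 0 < ε) :
    ∃ N : ℝ, 0 < N ∧ ∀ m ∈ Icc (-1 + 2 * ε) (1 - 2 * ε), ∀ n : ℕ, N < n → ∀ C : ℝ,
      ∃ Atil : (ℕ → ℝ) → ℝ, Measurable Atil ∧ ∀ hs : ℕ → ℝ,
        2 * π * ∑ i ∈ Finset.range n, hs i ^ 2 ≤ (n : ℝ) ^ ((3 : ℝ) / 2) →
        (∀ i < n, 16 / ((n : ℝ) ^ 5 * ε ^ 8) ≤ 2 * π * hs i ^ 2) →
        C ∈ Ioo (ε * GammaN m n hs) ((1 - ε) * GammaN m n hs) →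
        ∀ A Lam : ℝ → ℝ,
          (∀ c ∈ Ioo 0 (GammaN m n hs),
            A c ∈ Ioo 0 (SigmaN m n hs) ∧ MstarN m n hs (A c) = c) →
          (∀ a ∈ Ico 0 (SigmaN m n hs), 0 ≤ Lam a ∧ deriv (Mn m n hs) (Lam a) = a) →
          ∀ x : ℝ, -A (C - 3 / 4 * log n) < x → x < SigmaN m n hs - A (C + 2 * log n) →
            ∃ Lt Lx : ℝ,
              Atil hs ∈ Ioo 0 (SigmaN m n hs) ∧
              MstarN m n hs (Atil hs) +
                  1 / 2 * log (2 * π * deriv (deriv (Mn m n hs)) Lt) = C ∧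
              deriv (Mn m n hs) Lt = Atil hs ∧
              deriv (Mn m n hs) Lx = Atil hs + x ∧
              Atil hs ∈ Icc (A (C - 3 / 4 * log n)) (A (C + 2 * log n)) ∧
              Lt ∈ Icc (Lam (A (C - 3 / 4 * log n))) (Lam (A (C + 2 * log n))) ∧
              Lx ∈ Icc (Lam (A (C - 3 / 4 * log n) + x)) (Lam (A (C + 2 * log n) + x)) := by
  obtain ⟨N, hN1, hlogN⟩ := exists_forall_two_mul_log_le hε
  refine ⟨N, by linarith, fun m hεm n hNn C => ?_⟩
  have hm := mem_Ioo_of_mem_Icc hε hεm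
  refine ⟨_, measurable_deriv_Mn_saddlePoint hm n C, ?_⟩
  intro hs hsq hmin hC A Lam hA hLam x hx hx'
  have hn1 : (1 : ℝ) < n := hN1.trans hNn
  have hn : 0 < n := by exact_mod_cast zero_lt_one.trans hn1
  have hne : ∃ i < n, hs i ≠ 0 := ⟨0, hn, ne_zero_of_forall_le_sq hε hn hmin hn⟩
  obtain ⟨hlower, hupper⟩ := sub_log_mem_Ioo_and_add_log_mem_Ioo hε hεm hn1 (hlogN n hNn) hC
  obtain ⟨ha, hMa⟩ := hA _ hlower
  obtain ⟨hb, hMb⟩ := hA _ ⟨hupper.1, hupper.2.trans (sub_lt_self _ (by positivity))⟩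
  set a := A (C - 3 / 4 * log n)
  set b := A (C + 2 * log n)
  obtain ⟨hla0, hla⟩ := hLam a ⟨ha.1.le, ha.2⟩
  obtain ⟨hlb0, hlb⟩ := hLam b ⟨hb.1.le, hb.2⟩
  have hconj {c : ℝ} (hc : deriv (Mn m n hs) (Lam c) = c) :
      slopeConjugate (Mn m n hs) (Lam c) = MstarN m n hs c := by
    rw [← MstarN_deriv_Mn hm hne, hc]
  obtain ⟨hT, hTC⟩ := saddlePoint_mem_Icc hε hεm hn hmin hsq (sub_pos.1 hlower.1) hupper.2
    hla0 ((hconj hla).trans hMa) hlb0 ((hconj hlb).trans hMb)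
  have hmono : Monotone (deriv (Mn m n hs)) :=
    (strictMono_of_deriv_pos (deriv_deriv_Mn_pos hm hne)).monotone
  have haT : a ≤ deriv (Mn m n hs) (saddlePoint m n C hs) := hla ▸ hmono hT.1
  have hTb : deriv (Mn m n hs) (saddlePoint m n C hs) ≤ b := hlb ▸ hmono hT.2
  obtain ⟨Lx, hLx, hLxmem⟩ :=
    exists_eq_add_mem_Icc hmono (fun c hc => (hLam c hc).2) haT hTb hx hx'
  exact ⟨saddlePoint m n C hs, Lx, ⟨ha.1.trans_le haT, hTb.trans_lt hb.2⟩,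
    by rwa [MstarN_deriv_Mn hm hne], rfl, hLx, ⟨haT, hTb⟩, hT, hLxmem⟩

/-- existence of a (measurable in `h`) solution `(Ã_n, Λ̃_n, Λ̃ˣ_n)` of the
system `M*_n(h,Ã) + ½ log(2π M''_n(h,Λ̃)) = C`, `M'_n(h,Λ̃) = Ã`, `M'_n(h,Λ̃ˣ) = Ã + x`,
with the stated localization bounds, for all `x ∈ R_{n,λ*}(h)`. Here `A` is the inverse
of `M*_n(h,·)` and `Lam` the inverse of `M'_n(h,·)`. -/
theorem stmt13 (μ : Measure ℝ) (hAss : Assumption1 μ) (ε m : ℝ)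
    (hε : ε ∈ Set.Ioo (0 : ℝ) (1/2)) (hm : m ∈ Set.Icc (-1 + 2*ε) (1 - 2*ε)) :
    ∃ N : ℝ, 0 < N ∧ ∀ lamStar : ℝ, 1 < lamStar → ∀ n : ℕ, N < n → ∀ C : ℝ,
      ∃ Atil : (ℕ → ℝ) → ℝ, Measurable Atil ∧
        ∀ hs ∈ Lset m ε n,
          C ∈ Set.Ioo (ε * GammaN m n hs) ((1 - ε) * GammaN m n hs) →
          ∀ A Lam : ℝ → ℝ,
            (∀ c ∈ Set.Ioo 0 (GammaN m n hs),
              A c ∈ Set.Ioo 0 (SigmaN m n hs) ∧ MstarN m n hs (A c) = c) →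
            (∀ a ∈ Set.Ico 0 (SigmaN m n hs),
              0 ≤ Lam a ∧ deriv (Mn m n hs) (Lam a) = a) →
            ∀ x : ℝ, -A (C - 3/4 * Real.log n) < x →
              x < min ((n : ℝ) * sigmaStar μ m lamStar) (SigmaN m n hs) -
                  A (C + 2 * Real.log n) →
              ∃ Lt Lx : ℝ,
                Atil hs ∈ Set.Ioo 0 (SigmaN m n hs) ∧
                MstarN m n hs (Atil hs) +
                    1/2 * Real.log (2 * π * deriv (deriv (Mn m n hs)) Lt) = C ∧
                deriv (Mn m n hs) Lt = Atil hs ∧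
                deriv (Mn m n hs) Lx = Atil hs + x ∧
                Atil hs ∈ Set.Icc (A (C - 3/4 * Real.log n)) (A (C + 2 * Real.log n)) ∧
                Lt ∈ Set.Icc (Lam (A (C - 3/4 * Real.log n)))
                    (Lam (A (C + 2 * Real.log n))) ∧
                Lx ∈ Set.Icc (Lam (A (C - 3/4 * Real.log n) + x))
                    (Lam (A (C + 2 * Real.log n) + x)) :=
  let ⟨N, hN, hsol⟩ := stmt13_general hε.1
  ⟨N, hN, fun _ _ n hn C =>
    let ⟨Atil, hmeas, hAtil⟩ := hsol m hm n hn C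
    ⟨Atil, hmeas, fun hs hL hC A Lam hA hLam x hx hx' =>
      hAtil hs hL.1 hL.2.1 hC A Lam hA hLam x hx
        (hx'.trans_le (sub_le_sub_right (min_le_right _ _) _))⟩⟩
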